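/- arXiv:2304.14879 — 4 statements merged into one kernel-verified Lean document; each statement's English description precedes it below -/
import Mathlib

section
/- Let s and N be positive integers, let A be an s×s complex matrix with eigenvalue decomposition A = X Λ X⁻¹, where X is invertible and Λ = diag(λ_1, …, λ_s), let M and K be N×N complex matrices, let Δt ∈ ℂ, and set B = I_s ⊗ M + Δt (A ⊗ K). Suppose the sN×sN preconditioning matrix W is monolithic with respect to X with blocks W_1, …, W_s, i.e. W = (X ⊗ I_N) · blockdiag(W_1, …, W_s) · (X⁻¹ ⊗ I_N), and that each W_i is invertible. Then the smoothing matrix S = I − W⁻¹ B is monolithic with respect to X with blocks S_i = I_N − W_i⁻¹ (M + Δt λ_i K), i.e. S = (X ⊗ I_N) · blockdiag(S_1, …, S_s) · (X⁻¹ ⊗ I_N). -/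
open Matrix Kronecker

/-- Block-diagonal matrix indexed by `Fin s × Fin N` whose `i`-th diagonal block is `Y i`. -/
def blockDiagFst {m n : ℕ} (Y : Fin m → Matrix (Fin n) (Fin n) ℂ) :
    Matrix (Fin m × Fin n) (Fin m × Fin n) ℂ :=
  Matrix.of fun p q => if p.1 = q.1 then Y p.1 p.2 q.2 else 0

theorem blockDiagFst_mul {m n : ℕ} (Y Z : Fin m → Matrix (Fin n) (Fin n) ℂ) :
    blockDiagFst Y * blockDiagFst Z = blockDiagFst (fun i => Y i * Z i) := by
  ext ⟨i, a⟩ ⟨j, b⟩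
  simp only [blockDiagFst, Matrix.mul_apply, Matrix.of_apply, Fintype.sum_prod_type]
  rw [Finset.sum_eq_single i]
  · by_cases h : i = j <;> simp [h]
  · intro k _ hk
    simp [Ne.symm hk]
  · simp

theorem blockDiagFst_one {m n : ℕ} :
    blockDiagFst (fun _ : Fin m => (1 : Matrix (Fin n) (Fin n) ℂ)) = 1 := by
  ext ⟨i, a⟩ ⟨j, b⟩
  by_cases h : i = j <;> by_cases h' : a = b <;> simp [blockDiagFst, Matrix.one_apply, h, h']

theorem blockDiagFst_sub {m n : ℕ} (Y Z : Fin m → Matrix (Fin n) (Fin n) ℂ) :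
    blockDiagFst (fun i => Y i - Z i) = blockDiagFst Y - blockDiagFst Z := by
  ext ⟨i, a⟩ ⟨j, b⟩
  by_cases h : i = j <;> simp [blockDiagFst, h]

theorem blockDiagFst_pencil {m n : ℕ} (M K : Matrix (Fin n) (Fin n) ℂ) (c : ℂ) (l : Fin m → ℂ) :
    blockDiagFst (fun i => M + (c * l i) • K) =
      (1 : Matrix (Fin m) (Fin m) ℂ) ⊗ₖ M + c • (Matrix.diagonal l ⊗ₖ K) := by
  ext ⟨i, a⟩ ⟨j, b⟩
  by_cases h : i = j <;>
    simp [blockDiagFst, Matrix.one_apply, Matrix.diagonal_apply, h, mul_assoc]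

theorem stmt5 (s N : ℕ) (hs : 0 < s) (hN : 0 < N)
    (A X : Matrix (Fin s) (Fin s) ℂ) (lam : Fin s → ℂ)
    (hX : IsUnit X.det)
    (hA : A = X * Matrix.diagonal lam * X⁻¹)
    (M K : Matrix (Fin N) (Fin N) ℂ) (Δt : ℂ)
    (W : Matrix (Fin s × Fin N) (Fin s × Fin N) ℂ)
    (Wb : Fin s → Matrix (Fin N) (Fin N) ℂ)
    (hW : W = (X ⊗ₖ (1 : Matrix (Fin N) (Fin N) ℂ)) * blockDiagFst Wb *
      (X⁻¹ ⊗ₖ (1 : Matrix (Fin N) (Fin N) ℂ)))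
    (hWb : ∀ i, IsUnit (Wb i).det) :
    1 - W⁻¹ * ((1 : Matrix (Fin s) (Fin s) ℂ) ⊗ₖ M + Δt • (A ⊗ₖ K)) =
      (X ⊗ₖ (1 : Matrix (Fin N) (Fin N) ℂ)) *
        blockDiagFst (fun i => 1 - (Wb i)⁻¹ * (M + (Δt * lam i) • K)) *
        (X⁻¹ ⊗ₖ (1 : Matrix (Fin N) (Fin N) ℂ)) := by
  have hPQ : (X ⊗ₖ (1 : Matrix (Fin N) (Fin N) ℂ)) * (X⁻¹ ⊗ₖ (1 : Matrix (Fin N) (Fin N) ℂ)) = 1 := by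
    rw [← Matrix.mul_kronecker_mul, Matrix.mul_nonsing_inv X hX, one_mul, Matrix.one_kronecker_one]
  have hQP : (X⁻¹ ⊗ₖ (1 : Matrix (Fin N) (Fin N) ℂ)) * (X ⊗ₖ (1 : Matrix (Fin N) (Fin N) ℂ)) = 1 :=
    mul_eq_one_comm.mp hPQ
  have hB : (1 : Matrix (Fin s) (Fin s) ℂ) ⊗ₖ M + Δt • (A ⊗ₖ K) =
      (X ⊗ₖ (1 : Matrix (Fin N) (Fin N) ℂ)) * blockDiagFst (fun i => M + (Δt * lam i) • K) *
        (X⁻¹ ⊗ₖ (1 : Matrix (Fin N) (Fin N) ℂ)) := by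
    rw [blockDiagFst_pencil, hA, Matrix.mul_add, Matrix.add_mul, Matrix.mul_smul,
      Matrix.smul_mul, ← Matrix.mul_kronecker_mul, ← Matrix.mul_kronecker_mul,
      ← Matrix.mul_kronecker_mul, ← Matrix.mul_kronecker_mul]
    simp only [one_mul, mul_one, Matrix.mul_nonsing_inv X hX]
  have hD : blockDiagFst Wb * blockDiagFst (fun i => (Wb i)⁻¹) = 1 := by
    rw [blockDiagFst_mul, ← blockDiagFst_one]
    congr 1
    funext i
    exact Matrix.mul_nonsing_inv _ (hWb i)
  rw [hB, blockDiagFst_sub, blockDiagFst_one, ← blockDiagFst_mul]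
  generalize X ⊗ₖ (1 : Matrix (Fin N) (Fin N) ℂ) = P at *
  generalize X⁻¹ ⊗ₖ (1 : Matrix (Fin N) (Fin N) ℂ) = Q at *
  generalize blockDiagFst (fun i => (Wb i)⁻¹) = V at *
  generalize blockDiagFst (fun i => M + (Δt * lam i) • K) = C at *
  have hC : ∀ Z, Q * (P * Z) = Z := fun Z => by rw [← mul_assoc, hQP, one_mul]
  have hD2 : ∀ Z, blockDiagFst Wb * (V * Z) = Z := fun Z => by rw [← mul_assoc, hD, one_mul]
  have hWi : W⁻¹ = P * V * Q := by
    apply Matrix.inv_eq_right_inv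
    rw [hW]
    simp only [mul_assoc, hC, hD2, hPQ]
  rw [hWi, mul_sub, sub_mul, mul_one, hPQ]
  simp only [mul_assoc, hC]
end

section
/- Let s, N_h, N_H be positive integers, let A be an s×s complex matrix with eigenvalue decomposition A = X Λ X⁻¹, where X is invertible and Λ = diag(λ_1, …, λ_s), and let Δt ∈ ℂ. Let M_h, K_h be N_h×N_h complex matrices and M_H, K_H be N_H×N_H complex matrices, and set B_h = I_s ⊗ M_h + Δt (A ⊗ K_h) and B_H = I_s ⊗ M_H + Δt (A ⊗ K_H). Let P be an N_h×N_H matrix and R an N_H×N_h matrix, and set 𝐏 = I_s ⊗ P and 𝐑 = I_s ⊗ R. If each characteristic coarse block B_{H,λ_i Δt} = M_H + Δt λ_i K_H is invertible, then B_H is invertible and the coarse-grid correction matrix satisfies I − 𝐏 B_H⁻¹ 𝐑 B_h = (X ⊗ I_{N_h}) · blockdiag( I − P (M_H + Δt λ_1 K_H)⁻¹ R (M_h + Δt λ_1 K_h), …, I − P (M_H + Δt λ_s K_H)⁻¹ R (M_h + Δt λ_s K_h) ) · (X⁻¹ ⊗ I_{N_h}); in particular, the coarse-grid correction matrix is monolithic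 with respect to X. -/
open Matrix Kronecker

/-- `Y` is monolithic with respect to `X` if `(X⁻¹ ⊗ I) Y (X ⊗ I)` is block diagonal. -/
def Monolithic {s N : ℕ} (X : Matrix (Fin s) (Fin s) ℂ)
    (Y : Matrix (Fin s × Fin N) (Fin s × Fin N) ℂ) : Prop :=
  ∃ D : Fin s → Matrix (Fin N) (Fin N) ℂ,
    (X⁻¹ ⊗ₖ (1 : Matrix (Fin N) (Fin N) ℂ)) * Y * (X ⊗ₖ (1 : Matrix (Fin N) (Fin N) ℂ)) =
      blockDiagFst D

/-- Rectangular version of `blockDiagFst`. -/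
def bdRect {m n k : ℕ} (Y : Fin m → Matrix (Fin n) (Fin k) ℂ) :
    Matrix (Fin m × Fin n) (Fin m × Fin k) ℂ :=
  Matrix.of fun p q => if p.1 = q.1 then Y p.1 p.2 q.2 else 0

lemma bdRect_mul {m n k l : ℕ} (Y : Fin m → Matrix (Fin n) (Fin k) ℂ)
    (Z : Fin m → Matrix (Fin k) (Fin l) ℂ) :
    bdRect Y * bdRect Z = bdRect fun i => Y i * Z i := by
  ext ⟨a, b⟩ ⟨c, d⟩
  simp only [bdRect, Matrix.mul_apply, Matrix.of_apply, Fintype.sum_prod_type]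
  rw [Finset.sum_eq_single a]
  · by_cases h : a = c <;> simp [h]
  · intro x _ hx
    simp [Ne.symm hx]
  · simp

lemma bdRect_one {m n : ℕ} :
    bdRect (fun _ : Fin m => (1 : Matrix (Fin n) (Fin n) ℂ)) = 1 := by
  ext ⟨a, b⟩ ⟨c, d⟩
  by_cases h : a = c <;> simp [bdRect, Matrix.one_apply, h]

lemma one_kron_eq {m n k : ℕ} (P : Matrix (Fin n) (Fin k) ℂ) :
    (1 : Matrix (Fin m) (Fin m) ℂ) ⊗ₖ P = bdRect fun _ => P := by
  ext ⟨a, b⟩ ⟨c, d⟩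
  by_cases h : a = c <;> simp [bdRect, Matrix.one_apply, h]

lemma one_sub_bdRect {m n : ℕ} (Y : Fin m → Matrix (Fin n) (Fin n) ℂ) :
    1 - bdRect Y = blockDiagFst fun i => 1 - Y i := by
  ext ⟨a, b⟩ ⟨c, d⟩
  by_cases h : a = c <;> simp [bdRect, blockDiagFst, Matrix.one_apply, h]

lemma kron_comm {m n k : ℕ} (X : Matrix (Fin m) (Fin m) ℂ) (P : Matrix (Fin n) (Fin k) ℂ) :
    bdRect (fun _ : Fin m => P) * (X ⊗ₖ (1 : Matrix (Fin k) (Fin k) ℂ)) =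
      (X ⊗ₖ (1 : Matrix (Fin n) (Fin n) ℂ)) * bdRect (fun _ : Fin m => P) := by
  rw [← one_kron_eq, ← Matrix.mul_kronecker_mul, ← Matrix.mul_kronecker_mul]
  simp

lemma kron_inv {m : ℕ} (n : ℕ) (X Y : Matrix (Fin m) (Fin m) ℂ) (h : X * Y = 1) :
    (X ⊗ₖ (1 : Matrix (Fin n) (Fin n) ℂ)) * (Y ⊗ₖ (1 : Matrix (Fin n) (Fin n) ℂ)) = 1 := by
  rw [← Matrix.mul_kronecker_mul, h]
  simp

lemma block_decomp {m n : ℕ} (X : Matrix (Fin m) (Fin m) ℂ) (lam : Fin m → ℂ)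
    (h : X * X⁻¹ = 1) (t : ℂ) (M K : Matrix (Fin n) (Fin n) ℂ) :
    (1 : Matrix (Fin m) (Fin m) ℂ) ⊗ₖ M + t • ((X * Matrix.diagonal lam * X⁻¹) ⊗ₖ K) =
      (X ⊗ₖ (1 : Matrix (Fin n) (Fin n) ℂ)) * bdRect (fun i => M + (t * lam i) • K) *
        (X⁻¹ ⊗ₖ (1 : Matrix (Fin n) (Fin n) ℂ)) := by
  have e : bdRect (fun i => M + (t * lam i) • K) =
      (1 : Matrix (Fin m) (Fin m) ℂ) ⊗ₖ M + t • (Matrix.diagonal lam ⊗ₖ K) := by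
    ext ⟨a, b⟩ ⟨c, d⟩
    by_cases h : a = c <;> simp [bdRect, Matrix.one_apply, Matrix.diagonal_apply, h, mul_assoc]
  rw [e, Matrix.mul_add, Matrix.add_mul, Matrix.mul_smul, Matrix.smul_mul]
  simp only [← Matrix.mul_kronecker_mul, Matrix.mul_one, Matrix.one_mul, h]

theorem stmt6 (s Nh NH : ℕ) (hs : 0 < s) (hNh : 0 < Nh) (hNH : 0 < NH)
    (A X : Matrix (Fin s) (Fin s) ℂ) (lam : Fin s → ℂ)
    (hX : IsUnit X.det)
    (hA : A = X * Matrix.diagonal lam * X⁻¹)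
    (Δt : ℂ)
    (Mh Kh : Matrix (Fin Nh) (Fin Nh) ℂ) (MH KH : Matrix (Fin NH) (Fin NH) ℂ)
    (P : Matrix (Fin Nh) (Fin NH) ℂ) (R : Matrix (Fin NH) (Fin Nh) ℂ)
    (hBH : ∀ i, IsUnit (MH + (Δt * lam i) • KH).det) :
    IsUnit ((1 : Matrix (Fin s) (Fin s) ℂ) ⊗ₖ MH + Δt • (A ⊗ₖ KH)).det ∧
    1 - ((1 : Matrix (Fin s) (Fin s) ℂ) ⊗ₖ P) *
          ((1 : Matrix (Fin s) (Fin s) ℂ) ⊗ₖ MH + Δt • (A ⊗ₖ KH))⁻¹ *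
          ((1 : Matrix (Fin s) (Fin s) ℂ) ⊗ₖ R) *
          ((1 : Matrix (Fin s) (Fin s) ℂ) ⊗ₖ Mh + Δt • (A ⊗ₖ Kh)) =
      (X ⊗ₖ (1 : Matrix (Fin Nh) (Fin Nh) ℂ)) *
        blockDiagFst (fun i =>
          1 - P * (MH + (Δt * lam i) • KH)⁻¹ * R * (Mh + (Δt * lam i) • Kh)) *
        (X⁻¹ ⊗ₖ (1 : Matrix (Fin Nh) (Fin Nh) ℂ)) ∧
    Monolithic X
      (1 - ((1 : Matrix (Fin s) (Fin s) ℂ) ⊗ₖ P) *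
          ((1 : Matrix (Fin s) (Fin s) ℂ) ⊗ₖ MH + Δt • (A ⊗ₖ KH))⁻¹ *
          ((1 : Matrix (Fin s) (Fin s) ℂ) ⊗ₖ R) *
          ((1 : Matrix (Fin s) (Fin s) ℂ) ⊗ₖ Mh + Δt • (A ⊗ₖ Kh))) := by
  have h1 : X * X⁻¹ = 1 := Matrix.mul_nonsing_inv X hX
  have h2 : X⁻¹ * X = 1 := Matrix.nonsing_inv_mul X hX
  subst hA
  have hr : ((1 : Matrix (Fin s) (Fin s) ℂ) ⊗ₖ MH +
      Δt • ((X * Matrix.diagonal lam * X⁻¹) ⊗ₖ KH)) *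
      ((X ⊗ₖ (1 : Matrix (Fin NH) (Fin NH) ℂ)) * bdRect (fun i => (MH + (Δt * lam i) • KH)⁻¹) *
        (X⁻¹ ⊗ₖ (1 : Matrix (Fin NH) (Fin NH) ℂ))) = 1 := by
    rw [block_decomp X lam h1]
    have e : bdRect (fun i => MH + (Δt * lam i) • KH) *
        bdRect (fun i => (MH + (Δt * lam i) • KH)⁻¹) = 1 := by
      rw [bdRect_mul, ← bdRect_one]
      congr 1
      funext i
      exact Matrix.mul_nonsing_inv _ (hBH i)
    simp only [Matrix.mul_assoc]
    rw [← Matrix.mul_assoc (X⁻¹ ⊗ₖ 1) (X ⊗ₖ 1), kron_inv NH _ _ h2, Matrix.one_mul,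
      ← Matrix.mul_assoc (bdRect _) (bdRect _), e, Matrix.one_mul, kron_inv NH _ _ h1]
  have main : 1 - ((1 : Matrix (Fin s) (Fin s) ℂ) ⊗ₖ P) *
          ((1 : Matrix (Fin s) (Fin s) ℂ) ⊗ₖ MH +
            Δt • ((X * Matrix.diagonal lam * X⁻¹) ⊗ₖ KH))⁻¹ *
          ((1 : Matrix (Fin s) (Fin s) ℂ) ⊗ₖ R) *
          ((1 : Matrix (Fin s) (Fin s) ℂ) ⊗ₖ Mh +
            Δt • ((X * Matrix.diagonal lam * X⁻¹) ⊗ₖ Kh)) =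
      (X ⊗ₖ (1 : Matrix (Fin Nh) (Fin Nh) ℂ)) *
        blockDiagFst (fun i =>
          1 - P * (MH + (Δt * lam i) • KH)⁻¹ * R * (Mh + (Δt * lam i) • Kh)) *
        (X⁻¹ ⊗ₖ (1 : Matrix (Fin Nh) (Fin Nh) ℂ)) := by
    rw [Matrix.inv_eq_right_inv hr, block_decomp X lam h1, ← one_sub_bdRect, Matrix.mul_sub,
      Matrix.sub_mul, Matrix.mul_one, kron_inv Nh _ _ h1, one_kron_eq, one_kron_eq]
    simp only [← bdRect_mul]
    congr 1
    simp only [← Matrix.mul_assoc]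
    rw [kron_comm]
    congr 2
    simp only [Matrix.mul_assoc]
    rw [← Matrix.mul_assoc (X⁻¹ ⊗ₖ 1) (bdRect _), ← kron_comm, Matrix.mul_assoc,
      kron_inv Nh _ _ h2, Matrix.mul_one]
  refine ⟨Matrix.isUnit_det_of_right_inverse hr, main, ?_⟩
  rw [main]
  refine ⟨fun i => 1 - P * (MH + (Δt * lam i) • KH)⁻¹ * R * (Mh + (Δt * lam i) • Kh), ?_⟩
  simp only [Matrix.mul_assoc]
  rw [kron_inv Nh _ _ h2, Matrix.mul_one, ← Matrix.mul_assoc, kron_inv Nh _ _ h2,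
    Matrix.one_mul]
end

section
/- Let s and N be positive integers and let X be an invertible s×s complex matrix. If an sN×sN complex matrix T is monolithic with respect to X with blocks T_1, …, T_s, then the associated linear iteration converges, i.e. ρ(T) < 1, if and only if ρ(T_i) < 1 for every i with 1 ≤ i ≤ s; that is, the stage-coupled two-grid iteration converges if and only if the two-grid iteration for each characteristic stage converges. -/
open Matrix Kronecker

theorem det_blockDiagFst {m n : ℕ} (Y : Fin m → Matrix (Fin n) (Fin n) ℂ) :
    (blockDiagFst Y).det = ∏ i, (Y i).det := by
  rw [← Matrix.det_blockDiagonal, ← Matrix.det_submatrix_equiv_self (Equiv.prodComm (Fin m) (Fin n))]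
  congr 1

theorem spectrum_blockDiagFst {m n : ℕ} (Y : Fin m → Matrix (Fin n) (Fin n) ℂ) :
    spectrum ℂ (blockDiagFst Y) = ⋃ i, spectrum ℂ (Y i) := by
  ext μ
  have h : algebraMap ℂ (Matrix (Fin m × Fin n) (Fin m × Fin n) ℂ) μ - blockDiagFst Y
      = blockDiagFst (fun i => algebraMap ℂ (Matrix (Fin n) (Fin n) ℂ) μ - Y i) := by
    ext ⟨a, b⟩ ⟨c, d⟩
    by_cases hac : a = c
    · subst hac
      simp [blockDiagFst, Matrix.algebraMap_matrix_apply]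
    · simp [blockDiagFst, Matrix.algebraMap_matrix_apply, hac]
  simp only [Set.mem_iUnion, spectrum.mem_iff, h, Matrix.isUnit_iff_isUnit_det,
    det_blockDiagFst, isUnit_iff_ne_zero, not_not, Finset.prod_eq_zero_iff, Finset.mem_univ,
    true_and]

theorem stmt9 (s N : ℕ) (hs : 0 < s) (hN : 0 < N)
    (X : Matrix (Fin s) (Fin s) ℂ) (hX : IsUnit X.det)
    (T : Matrix (Fin s × Fin N) (Fin s × Fin N) ℂ)
    (Tb : Fin s → Matrix (Fin N) (Fin N) ℂ)
    (hT : (X⁻¹ ⊗ₖ (1 : Matrix (Fin N) (Fin N) ℂ)) * T *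
      (X ⊗ₖ (1 : Matrix (Fin N) (Fin N) ℂ)) = blockDiagFst Tb) :
    spectralRadius ℂ T < 1 ↔ ∀ i : Fin s, spectralRadius ℂ (Tb i) < 1 := by
  let U : (Matrix (Fin s × Fin N) (Fin s × Fin N) ℂ)ˣ :=
    ⟨X ⊗ₖ (1 : Matrix (Fin N) (Fin N) ℂ), X⁻¹ ⊗ₖ (1 : Matrix (Fin N) (Fin N) ℂ),
      by rw [← Matrix.mul_kronecker_mul, Matrix.mul_nonsing_inv _ hX]; simp,
      by rw [← Matrix.mul_kronecker_mul, Matrix.nonsing_inv_mul _ hX]; simp⟩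
  have hsp : spectrum ℂ T = ⋃ i, spectrum ℂ (Tb i) := by
    rw [← spectrum_blockDiagFst, ← hT]
    exact (spectrum.units_conjugate' (u := U)).symm
  have hr : spectralRadius ℂ T = Finset.univ.sup (fun i => spectralRadius ℂ (Tb i)) := by
    rw [Finset.sup_univ_eq_iSup]
    simp only [spectralRadius, hsp, iSup_iUnion]
  rw [hr, Finset.sup_lt_iff (by simp)]
  simp
end

section
/- Let s be a positive integer, let X be an invertible s×s complex matrix, and fix a multigrid hierarchy of levels 0, 1, …, ℓ with dimensions N_0, N_1, …, N_ℓ. For each level i, let C_i be an sN_i×sN_i complex matrix that is monolithic with respect to X with blocks C_{i,1}, …, C_{i,s}, each block being invertible, and for each level i ≥ 1 let W_i be an sN_i×sN_i matrix that is monolithic with respect to X with invertible blocks W_{i,1}, …, W_{i,s}; set the level-i smoother S_i = I − W_i⁻¹ C_i with per-stage blocks S_{i,j} = I − W_{i,j}⁻¹ C_{i,j}. For each i ≥ 1, let P_i be an N_i×N_{i−1} matrix and R_i an N_{i−1}×N_i matrix, with 𝐏_i = I_s ⊗ P_i and 𝐑_i = I_s ⊗ R_i. Fix natural numbers ν_1,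 ν_2 and γ, and define the multigrid iteration matrices recursively by T_0 = 0 and T_i = S_i^{ν_1} · ( I − 𝐏_i (I − T_{i−1}^γ) C_{i−1}⁻¹ 𝐑_i C_i ) · S_i^{ν_2} for 1 ≤ i ≤ ℓ; define per-stage iteration matrices by T_{0,j} = 0 and T_{i,j} = S_{i,j}^{ν_1} · ( I − P_i (I − T_{i−1,j}^γ) C_{i−1,j}⁻¹ R_i C_{i,j} ) · S_{i,j}^{ν_2}. Then for every level i, T_i is monolithic with respect to X with blocks T_{i,1}, …, T_{i,s}: T_i = (X ⊗ I_{N_i}) · blockdiag(T_{i,1}, …, T_{i,s}) · (X⁻¹ ⊗ I_{N_i}). -/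
open Matrix Kronecker

/-- Rectangular block-diagonal matrix. -/
def bdR {m n k : ℕ} (Y : Fin m → Matrix (Fin n) (Fin k) ℂ) :
    Matrix (Fin m × Fin n) (Fin m × Fin k) ℂ :=
  Matrix.of fun p q => if p.1 = q.1 then Y p.1 p.2 q.2 else 0

/-- `Y` is intertwined by `X ⊗ I` with the block-diagonal matrix of `B`. -/
def Mono {s n k : ℕ} (X : Matrix (Fin s) (Fin s) ℂ)
    (Y : Matrix (Fin s × Fin n) (Fin s × Fin k) ℂ)
    (B : Fin s → Matrix (Fin n) (Fin k) ℂ) : Prop :=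
  Y * (X ⊗ₖ (1 : Matrix (Fin k) (Fin k) ℂ)) = (X ⊗ₖ (1 : Matrix (Fin n) (Fin n) ℂ)) * bdR B

lemma bdR_mul {m n k l : ℕ} (Y : Fin m → Matrix (Fin n) (Fin k) ℂ)
    (Z : Fin m → Matrix (Fin k) (Fin l) ℂ) :
    bdR Y * bdR Z = bdR (fun j => Y j * Z j) := by
  ext ⟨a, b⟩ ⟨c, d⟩
  simp only [bdR, Matrix.mul_apply, Matrix.of_apply, Fintype.sum_prod_type]
  rw [Finset.sum_eq_single a]
  · by_cases h : a = c <;> simp [h]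
  · intro x _ hx
    simp [Ne.symm hx]
  · simp

lemma bdR_one {m n : ℕ} :
    bdR (fun _ : Fin m => (1 : Matrix (Fin n) (Fin n) ℂ)) = 1 := by
  ext ⟨a, b⟩ ⟨c, d⟩
  by_cases h : a = c <;> simp [bdR, Matrix.one_apply, h]

lemma bdR_sub {m n k : ℕ} (Y Z : Fin m → Matrix (Fin n) (Fin k) ℂ) :
    bdR (fun j => Y j - Z j) = bdR Y - bdR Z := by
  ext ⟨a, b⟩ ⟨c, d⟩
  by_cases h : a = c <;> simp [bdR, h]

lemma bdR_const {m n k : ℕ} (Q : Matrix (Fin n) (Fin k) ℂ) :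
    bdR (fun _ : Fin m => Q) = (1 : Matrix (Fin m) (Fin m) ℂ) ⊗ₖ Q := by
  ext ⟨a, b⟩ ⟨c, d⟩
  by_cases h : a = c <;> simp [bdR, Matrix.one_apply, h]

section
variable {s n k l : ℕ} {X : Matrix (Fin s) (Fin s) ℂ}

lemma Mono.mul {Y : Matrix (Fin s × Fin n) (Fin s × Fin k) ℂ}
    {Z : Matrix (Fin s × Fin k) (Fin s × Fin l) ℂ}
    {B : Fin s → Matrix (Fin n) (Fin k) ℂ} {D : Fin s → Matrix (Fin k) (Fin l) ℂ}
    (hY : Mono X Y B) (hZ : Mono X Z D) : Mono X (Y * Z) (fun j => B j * D j) := by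
  unfold Mono at *
  rw [Matrix.mul_assoc, hZ, ← Matrix.mul_assoc, hY, Matrix.mul_assoc, bdR_mul]

lemma Mono.sub {Y Z : Matrix (Fin s × Fin n) (Fin s × Fin k) ℂ}
    {B D : Fin s → Matrix (Fin n) (Fin k) ℂ}
    (hY : Mono X Y B) (hZ : Mono X Z D) : Mono X (Y - Z) (fun j => B j - D j) := by
  unfold Mono at *
  rw [Matrix.sub_mul, hY, hZ, bdR_sub, Matrix.mul_sub]

lemma Mono.one : Mono X (1 : Matrix (Fin s × Fin n) (Fin s × Fin n) ℂ) (fun _ => 1) := by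
  unfold Mono
  rw [bdR_one, Matrix.one_mul, Matrix.mul_one]

lemma Mono.const (Q : Matrix (Fin n) (Fin k) ℂ) :
    Mono X ((1 : Matrix (Fin s) (Fin s) ℂ) ⊗ₖ Q) (fun _ => Q) := by
  unfold Mono
  rw [bdR_const, ← Matrix.mul_kronecker_mul, ← Matrix.mul_kronecker_mul]
  simp

lemma Mono.pow {Y : Matrix (Fin s × Fin n) (Fin s × Fin n) ℂ}
    {B : Fin s → Matrix (Fin n) (Fin n) ℂ}
    (hY : Mono X Y B) (a : ℕ) : Mono X (Y ^ a) (fun j => B j ^ a) := by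
  induction a with
  | zero => simpa using Mono.one
  | succ a ih => simpa only [pow_succ] using ih.mul hY

lemma kron_right (hX : IsUnit X.det) :
    (X ⊗ₖ (1 : Matrix (Fin n) (Fin n) ℂ)) * (X⁻¹ ⊗ₖ (1 : Matrix (Fin n) (Fin n) ℂ)) = 1 := by
  rw [← Matrix.mul_kronecker_mul, Matrix.mul_nonsing_inv _ hX]
  simp

lemma kron_left (hX : IsUnit X.det) :
    (X⁻¹ ⊗ₖ (1 : Matrix (Fin n) (Fin n) ℂ)) * (X ⊗ₖ (1 : Matrix (Fin n) (Fin n) ℂ)) = 1 := by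
  rw [← Matrix.mul_kronecker_mul, Matrix.nonsing_inv_mul _ hX]
  simp

lemma Mono.eq (hX : IsUnit X.det) {Y : Matrix (Fin s × Fin n) (Fin s × Fin n) ℂ}
    {B : Fin s → Matrix (Fin n) (Fin n) ℂ} (hY : Mono X Y B) :
    Y = (X ⊗ₖ (1 : Matrix (Fin n) (Fin n) ℂ)) * bdR B *
      (X⁻¹ ⊗ₖ (1 : Matrix (Fin n) (Fin n) ℂ)) := by
  unfold Mono at hY
  rw [← hY, Matrix.mul_assoc, kron_right hX, Matrix.mul_one]

lemma Mono.of_eq (hX : IsUnit X.det) {Y : Matrix (Fin s × Fin n) (Fin s × Fin n) ℂ}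
    {B : Fin s → Matrix (Fin n) (Fin n) ℂ}
    (h : (X⁻¹ ⊗ₖ (1 : Matrix (Fin n) (Fin n) ℂ)) * Y *
        (X ⊗ₖ (1 : Matrix (Fin n) (Fin n) ℂ)) = blockDiagFst B) : Mono X Y B := by
  unfold Mono
  change _ = _ * blockDiagFst B
  rw [← h, ← Matrix.mul_assoc, ← Matrix.mul_assoc, kron_right hX, Matrix.one_mul]

lemma Mono.inv (hX : IsUnit X.det) {Y : Matrix (Fin s × Fin n) (Fin s × Fin n) ℂ}
    {B : Fin s → Matrix (Fin n) (Fin n) ℂ} (hY : Mono X Y B)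
    (hB : ∀ j, IsUnit (B j).det) : Mono X Y⁻¹ (fun j => (B j)⁻¹) := by
  have h1 : bdR B * bdR (fun j => (B j)⁻¹) = 1 := by
    rw [bdR_mul, ← bdR_one]
    congr 1
    funext j
    exact Matrix.mul_nonsing_inv _ (hB j)
  have h2 : Y⁻¹ = (X ⊗ₖ (1 : Matrix (Fin n) (Fin n) ℂ)) * bdR (fun j => (B j)⁻¹) *
      (X⁻¹ ⊗ₖ (1 : Matrix (Fin n) (Fin n) ℂ)) := by
    apply Matrix.inv_eq_right_inv
    unfold Mono at hY
    rw [← Matrix.mul_assoc, ← Matrix.mul_assoc, hY, Matrix.mul_assoc _ (bdR B), h1,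
      Matrix.mul_one, kron_right hX]
  unfold Mono
  rw [h2, Matrix.mul_assoc, kron_left hX, Matrix.mul_one]

end

theorem stmt15 (s : ℕ) (hs : 0 < s)
    (X : Matrix (Fin s) (Fin s) ℂ) (hX : IsUnit X.det)
    (ℓ : ℕ) (Nl : ℕ → ℕ) (hNl : ∀ i, i ≤ ℓ → 0 < Nl i)
    -- monolithic level operators with invertible blocks
    (C : (i : ℕ) → Matrix (Fin s × Fin (Nl i)) (Fin s × Fin (Nl i)) ℂ)
    (Cb : (i : ℕ) → Fin s → Matrix (Fin (Nl i)) (Fin (Nl i)) ℂ)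
    (hC : ∀ i, i ≤ ℓ →
      (X⁻¹ ⊗ₖ (1 : Matrix (Fin (Nl i)) (Fin (Nl i)) ℂ)) * C i *
        (X ⊗ₖ (1 : Matrix (Fin (Nl i)) (Fin (Nl i)) ℂ)) = blockDiagFst (Cb i))
    (hCb : ∀ i, i ≤ ℓ → ∀ j, IsUnit ((Cb i j).det))
    -- monolithic preconditioners (smoothers) with invertible blocks, on levels 1,…,ℓ
    (W : (i : ℕ) → Matrix (Fin s × Fin (Nl i)) (Fin s × Fin (Nl i)) ℂ)
    (Wb : (i : ℕ) → Fin s → Matrix (Fin (Nl i)) (Fin (Nl i)) ℂ)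
    (hW : ∀ i, 1 ≤ i → i ≤ ℓ →
      (X⁻¹ ⊗ₖ (1 : Matrix (Fin (Nl i)) (Fin (Nl i)) ℂ)) * W i *
        (X ⊗ₖ (1 : Matrix (Fin (Nl i)) (Fin (Nl i)) ℂ)) = blockDiagFst (Wb i))
    (hWb : ∀ i, 1 ≤ i → i ≤ ℓ → ∀ j, IsUnit ((Wb i j).det))
    -- prolongations and restrictions between consecutive levels
    (P : (i : ℕ) → Matrix (Fin (Nl (i + 1))) (Fin (Nl i)) ℂ)
    (R : (i : ℕ) → Matrix (Fin (Nl i)) (Fin (Nl (i + 1))) ℂ)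
    (ν₁ ν₂ γ : ℕ)
    -- the stage-coupled multigrid iteration matrices, with smoother Sᵢ = I − Wᵢ⁻¹ Cᵢ
    (T : (i : ℕ) → Matrix (Fin s × Fin (Nl i)) (Fin s × Fin (Nl i)) ℂ)
    (hT0 : T 0 = 0)
    (hTrec : ∀ i, i < ℓ →
      T (i + 1) =
        (1 - (W (i + 1))⁻¹ * C (i + 1)) ^ ν₁ *
          (1 - ((1 : Matrix (Fin s) (Fin s) ℂ) ⊗ₖ P i) * (1 - T i ^ γ) * (C i)⁻¹ *
            ((1 : Matrix (Fin s) (Fin s) ℂ) ⊗ₖ R i) * C (i + 1)) *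
          (1 - (W (i + 1))⁻¹ * C (i + 1)) ^ ν₂)
    -- the per-stage multigrid iteration matrices, with smoother blocks I − Wᵢⱼ⁻¹ Cᵢⱼ
    (Tb : (i : ℕ) → Fin s → Matrix (Fin (Nl i)) (Fin (Nl i)) ℂ)
    (hTb0 : ∀ j, Tb 0 j = 0)
    (hTbrec : ∀ i, i < ℓ → ∀ j,
      Tb (i + 1) j =
        (1 - (Wb (i + 1) j)⁻¹ * Cb (i + 1) j) ^ ν₁ *
          (1 - P i * (1 - Tb i j ^ γ) * (Cb i j)⁻¹ * R i * Cb (i + 1) j) *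
          (1 - (Wb (i + 1) j)⁻¹ * Cb (i + 1) j) ^ ν₂) :
    ∀ i, i ≤ ℓ →
      T i = (X ⊗ₖ (1 : Matrix (Fin (Nl i)) (Fin (Nl i)) ℂ)) * blockDiagFst (Tb i) *
        (X⁻¹ ⊗ₖ (1 : Matrix (Fin (Nl i)) (Fin (Nl i)) ℂ)) := by
  suffices H : ∀ i, i ≤ ℓ → Mono X (T i) (Tb i) from fun i hi => (H i hi).eq hX
  intro i
  induction i with
  | zero =>
    intro _
    have : bdR (Tb 0) = 0 := by
      ext ⟨a, b⟩ ⟨c, d⟩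
      simp [bdR, hTb0]
    unfold Mono
    rw [hT0, this, Matrix.zero_mul, Matrix.mul_zero]
  | succ i ih =>
    intro hi
    have hCi := Mono.of_eq hX (hC i (by omega))
    have hC' := Mono.of_eq hX (hC (i + 1) hi)
    have hW' := (Mono.of_eq hX (hW (i + 1) (by omega) hi)).inv hX (hWb (i + 1) (by omega) hi)
    have hS := Mono.one.sub (hW'.mul hC')
    have hCinv := hCi.inv hX (hCb i (by omega))
    have hTi := Mono.one.sub ((ih (by omega)).pow γ)
    have hM := Mono.one.sub (((((Mono.const (P i)).mul hTi).mul hCinv).mul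
      (Mono.const (R i))).mul hC')
    have hfin := ((hS.pow ν₁).mul hM).mul (hS.pow ν₂)
    rw [hTrec i hi, show Tb (i + 1) = _ from funext (hTbrec i hi)]
    exact hfin
end
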